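/- Let X, Y, H ∈ A₁ be an sl(2) triplet such that H = μpq + ν for some μ ∈ ℂ∖{0} and ν ∈ ℂ. Then: (1) μ ∈ {1, −1, 2, −2}. (2a) If μ = 1, then ν = −1/2 and there exists a ∈ ℂ∖{0} such that X = −(1/2)a·q² and Y = (1/(2a))·p². (2b) If μ = 2, then, writing b = ν, there exists a ∈ ℂ∖{0} such that either X = a(b + pq)q and Y = −(1/a)p, or X = −(1/a)q and Y = a·p(b + pq). -/

import Mathlib

noncomputable section

/-- The defining relation of the first Weyl algebra: `p * q = q * p + 1`. -/
inductive weylRel : FreeAlgebra ℂ (Fin 2) → FreeAlgebra ℂ (Fin 2) → Prop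
  | rel : weylRel (FreeAlgebra.ι ℂ 0 * FreeAlgebra.ι ℂ 1)
      (FreeAlgebra.ι ℂ 1 * FreeAlgebra.ι ℂ 0 + 1)

/-- The first Weyl algebra `A₁`, regarded as a complex Lie algebra via the commutator. -/
abbrev Weyl : Type := RingQuot weylRel

/-- The generator `p` of the Weyl algebra. -/
def wp : Weyl := RingQuot.mkAlgHom ℂ weylRel (FreeAlgebra.ι ℂ 0)

/-- The generator `q` of the Weyl algebra. -/
def wq : Weyl := RingQuot.mkAlgHom ℂ weylRel (FreeAlgebra.ι ℂ 1)

section General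

open Polynomial

variable {A : Type} [Ring A] [Algebra ℂ A]

theorem gen_p_aeval {p q : A} (h : p * q = q * p + 1) (f : ℂ[X]) :
    p * aeval (p * q) f = aeval (p * q) (f.comp (X + 1)) * p := by
  have h1 : p * (p * q) = (p * q + 1) * p := by
    rw [add_mul, one_mul, mul_assoc p q p, eq_sub_of_add_eq h.symm]; noncomm_ring
  induction f using Polynomial.induction_on' with
  | add f g hf hg => simp only [map_add, add_comp, mul_add, add_mul, hf, hg]
  | monomial n a =>
    have h2 : p * (p * q) ^ n = (p * q + 1) ^ n * p := by
      induction n with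
      | zero => simp
      | succ n ih => rw [pow_succ, ← mul_assoc, ih, mul_assoc, h1, pow_succ, mul_assoc]
    simp only [← C_mul_X_pow_eq_monomial, map_mul, aeval_C, map_pow, aeval_X, mul_comp, C_comp,
      X_pow_comp, map_add, map_one]
    rw [← mul_assoc, ← Algebra.commutes, mul_assoc, h2, mul_assoc]

theorem gen_aeval_q {p q : A} (h : p * q = q * p + 1) (f : ℂ[X]) :
    aeval (p * q) f * q = q * aeval (p * q) (f.comp (X + 1)) := by
  have h1 : (p * q) * q = q * (p * q + 1) := by
    rw [mul_add, mul_one, ← mul_assoc q p q, eq_sub_of_add_eq h.symm]; noncomm_ring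
  induction f using Polynomial.induction_on' with
  | add f g hf hg => simp only [map_add, add_comp, mul_add, add_mul, hf, hg]
  | monomial n a =>
    have h2 : (p * q) ^ n * q = q * (p * q + 1) ^ n := by
      induction n with
      | zero => simp
      | succ n ih => rw [pow_succ, mul_assoc, h1, ← mul_assoc, ih, pow_succ, mul_assoc]
    simp only [← C_mul_X_pow_eq_monomial, map_mul, aeval_C, map_pow, aeval_X, mul_comp, C_comp,
      X_pow_comp, map_add, map_one]
    rw [mul_assoc, h2, ← mul_assoc, Algebra.commutes, mul_assoc]

theorem gen_pk_aeval {p q : A} (h : p * q = q * p + 1) (k : ℕ) (f : ℂ[X]) :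
    p ^ k * aeval (p * q) f = aeval (p * q) (f.comp (X + C (k : ℂ))) * p ^ k := by
  induction k generalizing f with
  | zero => simp
  | succ k ih =>
    rw [pow_succ, mul_assoc, gen_p_aeval h, ← mul_assoc, ih, mul_assoc, comp_assoc]
    congr 3
    simp; ring_nf

theorem gen_pq_pow {p q : A} (h : p * q = q * p + 1) (k : ℕ) :
    p ^ k * q ^ k = aeval (p * q) (ascPochhammer ℂ k) := by
  induction k with
  | zero => simp
  | succ k ih =>
    rw [pow_succ', pow_succ, mul_assoc, ← mul_assoc (p ^ k), ih, ← mul_assoc, gen_p_aeval h,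
      ascPochhammer_succ_left, mul_comm, map_mul, aeval_X, mul_assoc]

theorem gen_q_aeval {p q : A} (h : p * q = q * p + 1) (f : ℂ[X]) :
    q * aeval (p * q) f = aeval (p * q) (f.comp (X - 1)) * q := by
  rw [gen_aeval_q h, comp_assoc]; simp

theorem gen_qp_pow {p q : A} (h : p * q = q * p + 1) (k : ℕ) :
    q ^ k * p ^ k = aeval (p * q) ((ascPochhammer ℂ k).comp (X - C (k : ℂ))) := by
  induction k with
  | zero => simp
  | succ k ih =>
    have h2 : q * p = aeval (p * q) (X - 1 : ℂ[X]) := by simp [h]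
    rw [pow_succ', pow_succ, mul_assoc, ← mul_assoc (q ^ k), ih, ← mul_assoc, gen_q_aeval h,
      mul_assoc, h2, ← map_mul, ascPochhammer_succ_right]
    congr 1
    simp only [comp_assoc, mul_comp]
    congr 1
    · congr 1; simp; ring
    · simp; ring

/-- pure polynomial part: F - F(x+k) linear forces quadratic -/
theorem poly_quad (F : ℂ[X]) (k μ ν : ℂ) (hk : k ≠ 0)
    (hF : F - F.comp (X + C k) = C μ * X + C ν) : F.natDegree ≤ 2 := by
  -- Q = α x² + β x with -(2αk) = μ, -(αk²+βk) = ν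
  obtain ⟨α, hα⟩ : ∃ α : ℂ, -(2 * α * k) = μ := ⟨-μ / (2 * k), by field_simp⟩
  obtain ⟨β, hβ⟩ : ∃ β : ℂ, -(α * k ^ 2 + β * k) = ν :=
    ⟨-(ν + α * k ^ 2) / k, by field_simp; ring⟩
  set G : ℂ[X] := F - (C α * X ^ 2 + C β * X) with hG
  have hper : ∀ x, G.eval (x + k) = G.eval x := by
    intro x
    have := congrArg (eval x) hF
    simp at this
    simp [hG]
    linear_combination -this + x * hα + hβ
  have hn : ∀ n : ℕ, G.eval (n * k) = G.eval 0 := by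
    intro n
    induction n with
    | zero => simp
    | succ n ih => rw [← ih, ← hper (n * k)]; push_cast; ring_nf
  have hc : G = C (G.eval 0) := by
    apply Polynomial.eq_of_infinite_eval_eq
    apply (Set.infinite_range_of_injective (f := fun n : ℕ => (n : ℂ) * k) ?_).mono
    · rintro _ ⟨n, rfl⟩
      simp [hn]
    · intro a b hab
      simpa [hk] using hab
  have : F = C α * X ^ 2 + C β * X + C (G.eval 0) := by rw [← hc, hG]; ring
  rw [this]; compute_degree

theorem gen_comm {p q : A} (h : p * q = q * p + 1) (k : ℕ) (f g : ℂ[X]) :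
    (aeval (p * q) f * q ^ k) * (p ^ k * aeval (p * q) g)
      - (p ^ k * aeval (p * q) g) * (aeval (p * q) f * q ^ k)
    = aeval (p * q) (f * g * (ascPochhammer ℂ k).comp (X - C (k : ℂ))
      - (f * g * (ascPochhammer ℂ k).comp (X - C (k : ℂ))).comp (X + C (k : ℂ))) := by
  rw [map_sub]
  congr 1
  · rw [mul_assoc, ← mul_assoc (q ^ k), gen_qp_pow h, ← map_mul, ← map_mul]; congr 1; ring
  · rw [mul_assoc, ← mul_assoc (aeval (p * q) g), ← map_mul, ← mul_assoc, gen_pk_aeval h,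
      mul_assoc, gen_pq_pow h, ← map_mul]
    congr 1
    simp only [mul_comp, comp_assoc, sub_comp, X_comp, C_comp, add_sub_cancel_right, comp_X]; ring

/-- Weight spaces. -/
def wtA (p q : A) (k : ℤ) : Submodule ℂ A :=
  Submodule.span ℂ {x | ∃ i j : ℕ, (j : ℤ) - i = k ∧ x = p ^ i * q ^ j}

theorem wtA_pos {p q : A} (h : p * q = q * p + 1) (k : ℕ) {x : A} (hx : x ∈ wtA p q k) :
    ∃ f : ℂ[X], x = aeval (p * q) f * q ^ k := by
  induction hx using Submodule.span_induction with
  | mem x hx =>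
    obtain ⟨i, j, hij, rfl⟩ := hx
    obtain rfl : j = i + k := by omega
    exact ⟨_, by rw [pow_add, ← mul_assoc, gen_pq_pow h]⟩
  | zero => exact ⟨0, by simp⟩
  | add x y _ _ hx hy =>
    obtain ⟨f, rfl⟩ := hx
    obtain ⟨g, rfl⟩ := hy
    exact ⟨f + g, by simp [add_mul]⟩
  | smul a x _ hx =>
    obtain ⟨f, rfl⟩ := hx
    exact ⟨a • f, by simp⟩

theorem wtA_neg {p q : A} (h : p * q = q * p + 1) (k : ℕ) {x : A} (hx : x ∈ wtA p q (-k)) :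
    ∃ f : ℂ[X], x = p ^ k * aeval (p * q) f := by
  induction hx using Submodule.span_induction with
  | mem x hx =>
    obtain ⟨i, j, hij, rfl⟩ := hx
    obtain rfl : i = k + j := by omega
    exact ⟨_, by rw [pow_add, mul_assoc, gen_pq_pow h]⟩
  | zero => exact ⟨0, by simp⟩
  | add x y _ _ hx hy =>
    obtain ⟨f, rfl⟩ := hx
    obtain ⟨g, rfl⟩ := hy
    exact ⟨f + g, by simp [mul_add]⟩
  | smul a x _ hx =>
    obtain ⟨f, rfl⟩ := hx
    exact ⟨a • f, by simp⟩

def adN (n : A) : Module.End ℂ A := LinearMap.mulLeft ℂ n - LinearMap.mulRight ℂ n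

theorem adN_apply (n x : A) : adN n x = n * x - x * n := by simp [adN]

theorem adN_mul (n x y : A) : adN n (x * y) = adN n x * y + x * adN n y := by
  simp only [adN_apply]; noncomm_ring

theorem adN_pow (n x : A) (c : ℂ) (hx : adN n x = c • x) (i : ℕ) :
    adN n (x ^ i) = (i * c) • x ^ i := by
  induction i with
  | zero => simp [adN_apply]
  | succ i ih =>
    rw [pow_succ, adN_mul, ih, hx, smul_mul_assoc, mul_smul_comm, ← add_smul]
    push_cast; ring_nf

theorem wtA_le {p q : A} (h : p * q = q * p + 1) (k : ℤ) :
    wtA p q k ≤ (adN (p * q)).eigenspace (k : ℂ) := by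
  apply Submodule.span_le.2
  rintro _ ⟨i, j, hij, rfl⟩
  have hp : adN (p * q) p = (-1 : ℂ) • p := by
    rw [adN_apply, mul_assoc, eq_sub_of_add_eq h.symm, neg_one_smul]; noncomm_ring
  have hq : adN (p * q) q = (1 : ℂ) • q := by
    rw [adN_apply, ← mul_assoc, eq_sub_of_add_eq h.symm, one_smul]
    noncomm_ring
  rw [SetLike.mem_coe, Module.End.mem_eigenspace_iff, adN_mul, adN_pow _ _ _ hp,
    adN_pow _ _ _ hq, smul_mul_assoc, mul_smul_comm, ← add_smul, ← hij]
  push_cast; ring_nf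

theorem iSup_wtA {p q : A} (hs : Submodule.span ℂ {x | ∃ i j : ℕ, x = p ^ i * q ^ j} = ⊤) :
    ⨆ k, wtA p q k = ⊤ := by
  rw [eq_top_iff, ← hs]
  apply Submodule.span_le.2
  rintro _ ⟨i, j, rfl⟩
  exact Submodule.mem_iSup_of_mem ((j : ℤ) - i) (Submodule.subset_span ⟨i, j, rfl, rfl⟩)

theorem eig_int {p q : A} (h : p * q = q * p + 1)
    (hs : Submodule.span ℂ {x | ∃ i j : ℕ, x = p ^ i * q ^ j} = ⊤)
    {x : A} (hx : x ≠ 0) {c : ℂ} (he : adN (p * q) x = c • x) : ∃ k : ℤ, c = k := by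
  by_contra! hc
  have hd := (Module.End.eigenspaces_iSupIndep (adN (p * q))) c
  apply hx
  refine (Submodule.disjoint_def.1 hd) x (Module.End.mem_eigenspace_iff.2 he) ?_
  have : ⨆ k, wtA p q k ≤ ⨆ j, ⨆ (_ : j ≠ c), (adN (p * q)).eigenspace j :=
    iSup_le fun k => (wtA_le h k).trans (le_iSup₂_of_le (k : ℂ) (hc k).symm le_rfl)
  rw [iSup_wtA hs] at this
  exact this trivial

theorem eig_mem {p q : A} (h : p * q = q * p + 1)
    (hs : Submodule.span ℂ {x | ∃ i j : ℕ, x = p ^ i * q ^ j} = ⊤)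
    {x : A} {k : ℤ} (he : adN (p * q) x = (k : ℂ) • x) : x ∈ wtA p q k := by
  have hd := (Module.End.eigenspaces_iSupIndep (adN (p * q))) (k : ℂ)
  have h1 : ⨆ k, wtA p q k ≤ wtA p q k ⊔ ⨆ j, ⨆ (_ : j ≠ (k : ℂ)), (adN (p * q)).eigenspace j := by
    refine iSup_le fun j => ?_
    by_cases hj : j = k
    · subst hj; exact le_sup_left
    · exact le_sup_of_le_right ((wtA_le h j).trans
        (le_iSup₂_of_le (j : ℂ) (by exact_mod_cast hj) le_rfl))
  rw [iSup_wtA hs] at h1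
  obtain ⟨y, hy, z, hz, rfl⟩ := Submodule.mem_sup.1 (h1 (trivial : x ∈ ⊤))
  have : z = 0 := by
    refine (Submodule.disjoint_def.1 hd) z ?_ hz
    have := Submodule.sub_mem _ (Module.End.mem_eigenspace_iff.2 he) (wtA_le h k hy)
    simpa using this
  simpa [this] using hy

theorem span_top {p q : A} (h : p * q = q * p + 1) (hg : Algebra.adjoin ℂ {p, q} = ⊤) :
    Submodule.span ℂ {x | ∃ i j : ℕ, x = p ^ i * q ^ j} = ⊤ := by
  set S := Submodule.span ℂ {x | ∃ i j : ℕ, x = p ^ i * q ^ j} with hS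
  have hm : ∀ i j, p ^ i * q ^ j ∈ S := fun i j => Submodule.subset_span ⟨i, j, rfl⟩
  have hp : ∀ s ∈ S, p * s ∈ S := by
    intro s hs
    induction hs using Submodule.span_induction with
    | mem x hx =>
      obtain ⟨i, j, rfl⟩ := hx
      rw [← mul_assoc, ← pow_succ']; exact hm _ _
    | zero => simp
    | add x y _ _ hx hy => rw [mul_add]; exact S.add_mem hx hy
    | smul a x _ hx => rw [mul_smul_comm]; exact S.smul_mem _ hx
  have hq0 : ∀ i j, q * (p ^ i * q ^ j) ∈ S := by
    intro i
    induction i with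
    | zero => intro j; simpa [← pow_succ'] using hm 0 (j + 1)
    | succ i ih =>
      intro j
      have : q * (p ^ (i + 1) * q ^ j) = p * (q * (p ^ i * q ^ j)) - p ^ i * q ^ j := by
        rw [← mul_assoc p q, h, pow_succ']; noncomm_ring
      rw [this]
      exact S.sub_mem (hp _ (ih j)) (hm _ _)
  have hq : ∀ s ∈ S, q * s ∈ S := by
    intro s hs
    induction hs using Submodule.span_induction with
    | mem x hx =>
      obtain ⟨i, j, rfl⟩ := hx
      exact hq0 _ _
    | zero => simp
    | add x y _ _ hx hy => rw [mul_add]; exact S.add_mem hx hy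
    | smul a x _ hx => rw [mul_smul_comm]; exact S.smul_mem _ hx
  have key : ∀ x ∈ Algebra.adjoin ℂ {p, q}, ∀ s ∈ S, x * s ∈ S := by
    intro x hx
    induction hx using Algebra.adjoin_induction with
    | mem x hx => rcases hx with rfl | rfl <;> assumption
    | algebraMap r => intro s hs; rw [← Algebra.smul_def]; exact S.smul_mem _ hs
    | add x y _ _ hx hy => intro s hs; rw [add_mul]; exact S.add_mem (hx s hs) (hy s hs)
    | mul x y _ _ hx hy => intro s hs; rw [mul_assoc]; exact hx _ (hy _ hs)
  rw [eq_top_iff]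
  intro x _
  simpa using key x (hg ▸ trivial) 1 (by simpa using hm 0 0)

theorem gen_half {p q : A} (h : p * q = q * p + 1)
    (hs : Submodule.span ℂ {x | ∃ i j : ℕ, x = p ^ i * q ^ j} = ⊤)
    (hinj : ∀ f : ℂ[X], aeval (p * q) f = 0 → f = 0)
    (x y : A) (hx : x ≠ 0) (hy : y ≠ 0) (μ ν : ℂ) (k : ℕ) (hk : 0 < k) (hk2 : μ * k = 2)
    (ex : adN (p * q) x = ((k : ℤ) : ℂ) • x) (ey : adN (p * q) y = ((-k : ℤ) : ℂ) • y)
    (t3 : x * y - y * x = μ • (p * q) + ν • (1 : A)) :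
    (μ = 1 ∧ ν = -(1/2) ∧ ∃ a : ℂ, a ≠ 0 ∧
      x = (-(1/2) * a) • (q * q) ∧ y = (1/(2*a)) • (p * p)) ∨
    (μ = 2 ∧ ∃ a : ℂ, a ≠ 0 ∧
      ((x = a • ((ν • (1 : A) + p * q) * q) ∧ y = (-(1/a)) • p) ∨
       (x = (-(1/a)) • q ∧ y = a • (p * (ν • (1 : A) + p * q))))) := by
  obtain ⟨f, rfl⟩ := wtA_pos h k (eig_mem h hs ex)
  obtain ⟨g, rfl⟩ := wtA_neg h k (eig_mem h hs ey)
  have hf : f ≠ 0 := by rintro rfl; simp at hx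
  have hg : g ≠ 0 := by rintro rfl; simp at hy
  rw [gen_comm h] at t3
  have hF := hinj (_ - (C μ * X + C ν)) (by
    rw [map_sub, t3]; simp [Algebra.smul_def])
  rw [sub_eq_zero] at hF
  have hkC : (k : ℂ) ≠ 0 := by exact_mod_cast hk.ne'
  have hdeg := poly_quad _ _ _ _ hkC hF
  have hPd : ((ascPochhammer ℂ k).comp (X - C (k : ℂ))).natDegree = k := by
    rw [natDegree_comp, ascPochhammer_natDegree, natDegree_X_sub_C, mul_one]
  have hP0 : (ascPochhammer ℂ k).comp (X - C (k : ℂ)) ≠ 0 := by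
    intro h0; rw [h0] at hPd; simp at hPd; omega
  rw [natDegree_mul (mul_ne_zero hf hg) hP0, natDegree_mul hf hg, hPd] at hdeg
  have hk12 : k = 1 ∨ k = 2 := by omega
  rcases hk12 with rfl | rfl
  · right
    have hμ : μ = 2 := by simpa using hk2
    subst hμ
    refine ⟨rfl, ?_⟩
    have hev : ∀ t : ℂ, f.eval t * g.eval t * (t - 1) - f.eval (t + 1) * g.eval (t + 1) * t
        = 2 * t + ν := by
      intro t
      have := congrArg (eval t) hF
      simpa using this
    have e0 := hev 0
    have e1 := hev 1
    have em := hev (-1)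
    have hcase : (f.natDegree ≤ 1 ∧ g.natDegree = 0) ∨ (f.natDegree = 0 ∧ g.natDegree ≤ 1) := by
      omega
    rcases hcase with ⟨h1, h2⟩ | ⟨h2, h1⟩
    · obtain ⟨e, rfl⟩ := natDegree_eq_zero.1 h2
      obtain ⟨v, u, rfl⟩ := exists_eq_X_add_C_of_natDegree_le_one h1
      simp at e0 e1 em
      have he : e ≠ 0 := by rintro rfl; simp at hg
      have hve : v * e = -1 := by linear_combination (e0 - e1) / 2
      have hv : v ≠ 0 := by rintro rfl; simp at hve
      have hu : u = v * ν := by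
        apply mul_right_cancel₀ he
        linear_combination -e0 - ν * hve
      refine ⟨v, hv, Or.inl ⟨?_, ?_⟩⟩
      · subst hu
        simp [Algebra.smul_def, mul_add, add_mul, mul_assoc]
        rw [add_comm]
      · have : e = -(1 / v) := by field_simp; linear_combination hve
        rw [← this]
        simp [Algebra.smul_def, Algebra.commutes]
    · obtain ⟨e, rfl⟩ := natDegree_eq_zero.1 h2
      obtain ⟨v, u, rfl⟩ := exists_eq_X_add_C_of_natDegree_le_one h1
      simp at e0 e1 em
      have he : e ≠ 0 := by rintro rfl; simp at hf
      have hve : v * e = -1 := by linear_combination (e0 - e1) / 2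
      have hv : v ≠ 0 := by rintro rfl; simp at hve
      have hu : u = v * ν := by
        apply mul_right_cancel₀ he
        linear_combination -e0 - ν * hve
      refine ⟨v, hv, Or.inr ⟨?_, ?_⟩⟩
      · have : e = -(1 / v) := by field_simp; linear_combination hve
        rw [← this]
        simp [Algebra.smul_def]
      · subst hu
        rw [← mul_smul_comm]
        simp [Algebra.smul_def, mul_add]
        rw [add_comm]
  · left
    have hμ : μ = 1 := by push_cast at hk2; linear_combination hk2 / 2
    subst hμ
    obtain ⟨e, rfl⟩ := natDegree_eq_zero.1 (show f.natDegree = 0 by omega)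
    obtain ⟨d, rfl⟩ := natDegree_eq_zero.1 (show g.natDegree = 0 by omega)
    have he : e ≠ 0 := by rintro rfl; simp at hf
    have hev : ∀ t : ℂ, e * d * ((t - 2) * (t - 1)) - e * d * (t * (t + 1)) = t + ν := by
      intro t
      have := congrArg (eval t) hF
      simp [ascPochhammer_succ_right] at this
      linear_combination this
    have e0 := hev 0
    have e1 := hev 1
    have hed : e * d = -(1/4) := by linear_combination (e0 - e1) / 4
    refine ⟨rfl, by linear_combination 2 * hed - e0, -2 * e, by simpa using he, ?_, ?_⟩
    · rw [show -(1 / 2) * (-2 * e) = e by ring]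
      simp [Algebra.smul_def, pow_two]
    · have : 1 / (2 * (-2 * e)) = d := by field_simp; linear_combination -4 * hed
      rw [this]
      simp [Algebra.smul_def, pow_two, Algebra.commutes]

theorem gen_neg (x y n : A) (μ ν : ℂ) (h : x * y - y * x = μ • n + ν • (1 : A)) :
    y * x - x * y = (-μ) • n + (-ν) • (1 : A) := by
  rw [← neg_sub, h, neg_smul, neg_smul, neg_add]

end General

theorem wrel : wp * wq = wq * wp + 1 := by
  have := RingQuot.mkAlgHom_rel ℂ weylRel.rel
  simpa [wp, wq] using this

theorem w_adjoin : Algebra.adjoin ℂ {wp, wq} = ⊤ := by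
  have hsurj := RingQuot.mkAlgHom_surjective ℂ weylRel
  have h1 : (Algebra.adjoin ℂ (Set.range (FreeAlgebra.ι ℂ (X := Fin 2)))).map
      (RingQuot.mkAlgHom ℂ weylRel) = ⊤ := by
    rw [FreeAlgebra.adjoin_range_ι, Algebra.map_top, AlgHom.range_eq_top]
    exact hsurj
  rw [AlgHom.map_adjoin] at h1
  rw [← h1]
  congr 1
  ext x
  simp only [Set.mem_insert_iff, Set.mem_singleton_iff, Set.mem_image, Set.mem_range,
    Fin.exists_fin_two, wp, wq]
  constructor
  · rintro (rfl | rfl)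
    · exact ⟨_, Or.inl rfl, rfl⟩
    · exact ⟨_, Or.inr rfl, rfl⟩
  · rintro ⟨_, rfl | rfl, rfl⟩
    · exact Or.inl rfl
    · exact Or.inr rfl

open Polynomial in
def wRep : Weyl →ₐ[ℂ] Module.End ℂ ℂ[X] :=
  RingQuot.liftAlgHom ℂ ⟨FreeAlgebra.lift ℂ
    ![(derivative : ℂ[X] →ₗ[ℂ] ℂ[X]), LinearMap.mulLeft ℂ (X : ℂ[X])], by
    rintro _ _ ⟨⟩
    simp only [map_mul, map_add, map_one, FreeAlgebra.lift_ι_apply]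
    apply LinearMap.ext
    intro f
    simp
    ring⟩

open Polynomial in
theorem w_inj (f : ℂ[X]) (hf : aeval (wp * wq) f = 0) : f = 0 := by
  have h1 : aeval (wRep (wp * wq)) f = 0 := by
    rw [aeval_algHom_apply, hf, map_zero]
  have h2 : ∀ n : ℕ, (wRep (wp * wq)) (X ^ n) = ((n : ℂ) + 1) • (X ^ n : ℂ[X]) := by
    intro n
    simp [wRep, wp, wq, smul_eq_C_mul]
    rcases n with _ | n
    · simp
    · simp; ring
  apply Polynomial.eq_zero_of_infinite_isRoot
  apply (Set.infinite_range_of_injective (f := fun n : ℕ => (n : ℂ) + 1) ?_).mono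
  · rintro _ ⟨n, rfl⟩
    have hv : (wRep (wp * wq)).HasEigenvector ((n : ℂ) + 1) (X ^ n : ℂ[X]) :=
      ⟨Module.End.mem_eigenspace_iff.2 (h2 n), pow_ne_zero _ X_ne_zero⟩
    have := Module.End.aeval_apply_of_hasEigenvector (p := f) hv
    rw [h1] at this
    have h3 : eval ((n : ℂ) + 1) f = 0 := by
      simpa [smul_eq_C_mul, X_ne_zero] using this.symm
    exact h3
  · intro a b hab
    simpa using hab

theorem w_half (x y : Weyl) (hx : x ≠ 0) (hy : y ≠ 0) (μ ν : ℂ) (k : ℕ) (hk2 : μ * k = 2)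
    (ex : adN (wp * wq) x = ((k : ℤ) : ℂ) • x) (ey : adN (wp * wq) y = ((-k : ℤ) : ℂ) • y)
    (t3 : x * y - y * x = μ • (wp * wq) + ν • (1 : Weyl)) :
    (μ = 1 ∧ ν = -(1/2) ∧ ∃ a : ℂ, a ≠ 0 ∧
      x = (-(1/2) * a) • (wq * wq) ∧ y = (1/(2*a)) • (wp * wp)) ∨
    (μ = 2 ∧ ∃ a : ℂ, a ≠ 0 ∧
      ((x = a • ((ν • (1 : Weyl) + wp * wq) * wq) ∧ y = (-(1/a)) • wp) ∨
       (x = (-(1/a)) • wq ∧ y = a • (wp * (ν • (1 : Weyl) + wp * wq))))) :=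
  gen_half wrel (span_top wrel w_adjoin) w_inj x y hx hy μ ν k
    (Nat.pos_of_ne_zero (by rintro rfl; simp at hk2)) hk2 ex ey t3

/-- Joseph's classification of `sl(2)` triplets `X, Y, H` in `A₁` with `H = μ pq + ν`:
(1) `μ ∈ {1, -1, 2, -2}`;
(2a) if `μ = 1` then `ν = -1/2` and, for some nonzero `a`, `X = -(1/2)a q²` and
`Y = (1/(2a)) p²`;
(2b) if `μ = 2` then, with `b = ν`, for some nonzero `a`, either `X = a(b + pq)q` and
`Y = -(1/a) p`, or `X = -(1/a) q` and `Y = a p(b + pq)`. -/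
theorem statement14 (X Y H : Weyl) (hX : X ≠ 0) (hY : Y ≠ 0) (hH : H ≠ 0)
    (t1 : ⁅H, X⁆ = (2 : ℂ) • X) (t2 : ⁅H, Y⁆ = (-2 : ℂ) • Y) (t3 : ⁅X, Y⁆ = H)
    (μ ν : ℂ) (hμ : μ ≠ 0) (hHform : H = μ • (wp * wq) + ν • (1 : Weyl)) :
    (μ = 1 ∨ μ = -1 ∨ μ = 2 ∨ μ = -2) ∧
    (μ = 1 → ν = -(1/2) ∧ ∃ a : ℂ, a ≠ 0 ∧
      X = (-(1/2) * a) • (wq * wq) ∧ Y = (1/(2*a)) • (wp * wp)) ∧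
    (μ = 2 → ∃ a : ℂ, a ≠ 0 ∧
      ((X = a • ((ν • (1 : Weyl) + wp * wq) * wq) ∧ Y = (-(1/a)) • wp) ∨
       (X = (-(1/a)) • wq ∧ Y = a • (wp * (ν • (1 : Weyl) + wp * wq))))) := by
  subst hHform
  have had : ∀ (x : Weyl) (c : ℂ), ⁅μ • (wp * wq) + ν • (1 : Weyl), x⁆ = c • x →
      adN (wp * wq) x = (c / μ) • x := by
    intro x c hc
    have h1 : μ • adN (wp * wq) x = c • x := by
      rw [← hc, Ring.lie_def, adN_apply]
      simp only [add_mul, mul_add, smul_mul_assoc, mul_smul_comm, one_mul, mul_one, smul_sub]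
      abel
    rw [div_eq_inv_mul, mul_smul, ← h1, smul_smul, inv_mul_cancel₀ hμ, one_smul]
  have e1 := had X 2 t1
  have e2 := had Y (-2) t2
  obtain ⟨k, hk⟩ := eig_int wrel (span_top wrel w_adjoin) hX e1
  have hk2 : μ * k = 2 := by rw [← hk]; field_simp
  have hk' : (-2 : ℂ) / μ = -(k : ℂ) := by rw [neg_div, hk]
  rw [hk] at e1
  rw [hk'] at e2
  rw [Ring.lie_def] at t3
  obtain ⟨n, rfl | rfl⟩ := k.eq_nat_or_neg
  · rcases w_half X Y hX hY μ ν n (by simpa using hk2) e1 (by rw [e2]; push_cast; rfl) t3 with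
      ⟨rfl, hν, h⟩ | ⟨rfl, h⟩
    · exact ⟨by simp, fun _ => ⟨hν, h⟩, fun h2 => by norm_num at h2⟩
    · exact ⟨by simp, fun h2 => by norm_num at h2, fun _ => h⟩
  · have hm : μ = -1 ∨ μ = -2 := by
      rcases w_half Y X hY hX (-μ) (-ν) n (by push_cast at hk2; linear_combination hk2)
        (by rw [e2]; push_cast; rw [neg_neg]) e1
        (gen_neg X Y _ μ ν t3) with ⟨h, -⟩ | ⟨h, -⟩
      · left; linear_combination -h
      · right; linear_combination -h
    rcases hm with rfl | rfl
    · exact ⟨by simp, fun h => by norm_num at h, fun h => by norm_num at h⟩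
    · exact ⟨by simp, fun h => by norm_num at h, fun h => by norm_num at h⟩
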